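/- arXiv:math-ph/0412009 — 2 statements merged into one kernel-verified Lean document; each statement's English description precedes it below -/
import Mathlib

section
/- Convexity of classical minus quantum entropy (Corollary 6): Let P^1,…,P^M be positive semidefinite operators on H₁ with ∑_α P^α = id_{H₁}, and define S^{cl,Q}[ρ₁₂] = ∑_α S[ Tr₁[(P^α⊗id₂) ρ₁₂] ] for density matrices ρ₁₂ on H₁⊗H₂. Then the map ρ₁₂ ↦ S^{cl,Q}[ρ₁₂] − S[ρ₁₂] is convex on the set of density matrices on H₁⊗H₂: for density matrices A₁₂, B₁₂ and t ∈ [0,1], S^{cl,Q}[tA₁₂+(1−t)B₁₂] − S[tA₁₂+(1−t)B₁₂] ≤ t( S^{cl,Q}[A₁₂] − S[A₁₂] ) + (1−t)( S^{cl,Q}[B₁₂] − S[B₁₂] ). -/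
open Matrix Kronecker Real
open scoped ComplexOrder

/-- Von Neumann entropy of a (Hermitian) matrix: the sum of `-λ ln λ` over its
eigenvalues, with the convention `0 ln 0 = 0`. -/
noncomputable def entropy {n : Type*} [Fintype n] [DecidableEq n]
    (A : Matrix n n ℂ) : ℝ :=
  if h : A.IsHermitian then ∑ i, Real.negMulLog (h.eigenvalues i) else 0

/-- Partial trace over the first factor of a twofold tensor product. -/
noncomputable def ptraceFst {m k : Type*} [Fintype m]
    (ρ : Matrix (m × k) (m × k) ℂ) : Matrix k k ℂ :=
  Matrix.of fun i j => ∑ a : m, ρ (a, i) (a, j)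

/-- Partial trace over the second factor of a twofold tensor product. -/
noncomputable def ptraceSnd {m k : Type*} [Fintype k]
    (ρ : Matrix (m × k) (m × k) ℂ) : Matrix m m ℂ :=
  Matrix.of fun i j => ∑ a : k, ρ (i, a) (j, a)

/-- Partial trace over the first factor of a threefold tensor product
(indexed as `(H₁ ⊗ H₂) ⊗ H₃`). -/
noncomputable def ptraceFst₃ {a b c : Type*} [Fintype a]
    (ρ : Matrix ((a × b) × c) ((a × b) × c) ℂ) : Matrix (b × c) (b × c) ℂ :=
  Matrix.of fun p q => ∑ i : a, ρ ((i, p.1), p.2) ((i, q.1), q.2)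

/-!
For `C = t A + (1 - t) B` one has `S[C] = t (S[A] + D(A‖C)) + (1 - t) (S[B] + D(B‖C))`, where `D` is
the relative entropy, and the same identity holds outcome by outcome after the measurement. Hence
convexity follows from the fact that measuring does not increase relative entropy.

For the latter, write `L_C` and `R_A` for multiplication by `C` on the left and by `A` on the right.
The function `s ↦ ⟨A, ln (L_C + s R_A) 1⟩` is `Tr A ln C` at `s = 0` and asymptotic to
`Tr A ln A + Tr A ln s`, so it suffices that its derivative `⟨A, (L_C + s R_A)⁻¹ A⟩` does not
increase under measurement. This derivative is the maximum of `2 Re ⟨X, A⟩ - ⟨X, (L_C + s R_A) X⟩`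
over `X`, and by the Kadison–Schwarz inequality the adjoint of the measurement pulls trial operators
`X` for the measured states back to one for the original states with at least the same value.
-/

open Filter Topology

theorem hasDerivAt_mul_log_add_mul {a c s : ℝ} (ha : 0 ≤ a) (hc : 0 ≤ c) (hs : 0 < s) :
    HasDerivAt (fun s ↦ a * log (c + s * a)) (a ^ 2 / (c + s * a)) s := by
  rcases ha.eq_or_lt with rfl | ha
  · simpa using hasDerivAt_const s (0 : ℝ)
  · have hpos : 0 < c + s * a := by positivity
    have hlin : HasDerivAt (fun s ↦ c + s * a) a s := by
      simpa using ((hasDerivAt_id s).mul_const a).const_add c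
    simpa only [sq, mul_div_assoc] using (hlin.log hpos.ne').const_mul a

theorem continuousOn_mul_log_add_mul {w a c : ℝ} (ha : 0 ≤ a) (hc : 0 ≤ c)
    (hw : c = 0 → w * a = 0) :
    ContinuousOn (fun s ↦ w * (a * log (c + s * a))) (Set.Ici 0) := by
  simp only [← mul_assoc]
  rcases hc.eq_or_lt with rfl | hc
  · simpa only [hw rfl, zero_mul] using continuousOn_const
  · refine continuousOn_const.mul (ContinuousOn.log (by fun_prop) fun s hs ↦ ?_)
    have : 0 ≤ s * a := mul_nonneg hs ha
    positivity

theorem tendsto_mul_log_add_mul_sub_mul_log {a : ℝ} (ha : 0 ≤ a) (c : ℝ) :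
    Tendsto (fun s ↦ a * log (c + s * a) - a * log s) atTop (𝓝 (a * log a)) := by
  rcases ha.eq_or_lt with rfl | ha
  · simp
  · have hlin : Tendsto (fun s ↦ c / s + a) atTop (𝓝 a) := by
      simpa using (tendsto_const_nhds.div_atTop tendsto_id).add_const a
    refine ((hlin.log ha.ne').const_mul a).congr' ?_
    filter_upwards [eventually_gt_atTop 0, hlin.eventually_ne ha.ne'] with s hs hne
    rw [← mul_sub, ← log_div _ hs.ne']
    · congr 2
      field_simp
    · intro h
      apply hne
      field_simp
      linarith

theorem two_mul_re_star_mul_sub_le {a c s : ℝ} (ha : 0 ≤ a) (hc : 0 ≤ c) (hs : 0 < s) (x e : ℂ) :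
    2 * (star x * (a • e)).re - (c + s * a) * ‖x‖ ^ 2 ≤ ‖e‖ ^ 2 * (a ^ 2 / (c + s * a)) := by
  rcases ha.eq_or_lt with rfl | ha
  · simpa using mul_nonneg hc (sq_nonneg ‖x‖)
  · have hpos : 0 < c + s * a := by positivity
    rw [← mul_div_assoc, le_div_iff₀ hpos]
    simp only [← Complex.normSq_eq_norm_sq, Complex.normSq_apply, Complex.mul_re, Complex.smul_re,
      Complex.smul_im, Complex.star_def, Complex.conj_re, Complex.conj_im, smul_eq_mul]
    linarith [sq_nonneg (a * e.re - (c + s * a) * x.re),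
      sq_nonneg (a * e.im - (c + s * a) * x.im)]

theorem two_mul_re_star_smul_mul_sub_eq {a c s : ℝ} (ha : 0 ≤ a) (hc : 0 ≤ c) (hs : 0 < s)
    (e : ℂ) :
    2 * (star ((a / (c + s * a)) • e) * (a • e)).re -
        (c + s * a) * ‖(a / (c + s * a)) • e‖ ^ 2 =
      ‖e‖ ^ 2 * (a ^ 2 / (c + s * a)) := by
  rcases ha.eq_or_lt with rfl | ha
  · simp
  · have hne : c + s * a ≠ 0 := by positivity
    simp only [← Complex.normSq_eq_norm_sq, Complex.normSq_apply, Complex.mul_re, Complex.smul_re,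
      Complex.smul_im, Complex.star_def, Complex.conj_re, Complex.conj_im, smul_eq_mul]
    field_simp [hne]
    ring

theorem mulVec_eq_zero_of_posSemidef_sub {n : Type*} [Fintype n] {A C : Matrix n n ℂ} {τ : ℝ}
    (hτ : 0 < τ) (hA : A.PosSemidef) (hAC : (C - τ • A).PosSemidef) {v : n → ℂ}
    (hv : C *ᵥ v = 0) : A *ᵥ v = 0 := by
  have hform : τ • (star v ⬝ᵥ A *ᵥ v) ≤ 0 := by
    simpa only [sub_mulVec, hv, zero_sub, smul_mulVec, dotProduct_neg, dotProduct_smul,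
      neg_nonneg] using hAC.dotProduct_mulVec_nonneg v
  rw [← hA.dotProduct_mulVec_zero_iff]
  refine le_antisymm ?_ (hA.dotProduct_mulVec_nonneg v)
  exact (smul_nonpos_iff_nonpos_of_pos_left hτ).1 hform

section JointSpectrum

variable {n : Type*} [Fintype n] [DecidableEq n] {A C : Matrix n n ℂ}

/-- The matrix `(⟨vⱼ, X uᵢ⟩)ⱼᵢ` of `X` with respect to the eigenbases `u` of `A` and `v` of `C`. -/
noncomputable def eigenbasisEntries (hA : A.IsHermitian) (hC : C.IsHermitian) :
    Matrix n n ℂ ≃ₗ[ℂ] Matrix n n ℂ where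
  toFun X := star (hC.eigenvectorUnitary : Matrix n n ℂ) * X * hA.eigenvectorUnitary
  invFun X := hC.eigenvectorUnitary * X * star (hA.eigenvectorUnitary : Matrix n n ℂ)
  map_add' X Y := by rw [Matrix.mul_add, Matrix.add_mul]
  map_smul' r X := by rw [Matrix.mul_smul, Matrix.smul_mul, RingHom.id_apply]
  left_inv X := by
    simp only [← Matrix.mul_assoc]
    rw [mem_unitaryGroup_iff.1 hC.eigenvectorUnitary.2,
      Matrix.one_mul, Matrix.mul_assoc, mem_unitaryGroup_iff.1 hA.eigenvectorUnitary.2,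
      Matrix.mul_one]
  right_inv X := by
    simp only [← Matrix.mul_assoc]
    rw [mem_unitaryGroup_iff'.1 hC.eigenvectorUnitary.2,
      Matrix.one_mul, Matrix.mul_assoc, mem_unitaryGroup_iff'.1 hA.eigenvectorUnitary.2,
      Matrix.mul_one]

theorem eigenbasisEntries_apply (hA : A.IsHermitian) (hC : C.IsHermitian) (X : Matrix n n ℂ) :
    eigenbasisEntries hA hC X =
      star (hC.eigenvectorUnitary : Matrix n n ℂ) * X * hA.eigenvectorUnitary :=
  rfl

theorem eigenbasisEntries_mul_apply (hA : A.IsHermitian) (hC : C.IsHermitian) (X : Matrix n n ℂ)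
    (i j : n) :
    eigenbasisEntries hA hC (X * A) j i = eigenbasisEntries hA hC X j i * hA.eigenvalues i := by
  have hdiag : A * (hA.eigenvectorUnitary : Matrix n n ℂ) =
      (hA.eigenvectorUnitary : Matrix n n ℂ) * diagonal (RCLike.ofReal ∘ hA.eigenvalues) := by
    conv_lhs => enter [1]; rw [hA.spectral_theorem]
    rw [Unitary.conjStarAlgAut_apply, Matrix.mul_assoc, Unitary.coe_star_mul_self, Matrix.mul_one]
  rw [eigenbasisEntries_apply, ← Matrix.mul_assoc, Matrix.mul_assoc, hdiag, ← Matrix.mul_assoc,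
    mul_diagonal, eigenbasisEntries_apply]
  rfl

theorem eigenbasisEntries_cfc_mul_apply (hA : A.IsHermitian) (hC : C.IsHermitian) (f : ℝ → ℝ)
    (X : Matrix n n ℂ) (i j : n) :
    eigenbasisEntries hA hC (cfc f C * X) j i =
      f (hC.eigenvalues j) * eigenbasisEntries hA hC X j i := by
  have hdiag : star (hC.eigenvectorUnitary : Matrix n n ℂ) * cfc f C =
      diagonal (RCLike.ofReal ∘ f ∘ hC.eigenvalues) *
        star (hC.eigenvectorUnitary : Matrix n n ℂ) := by
    rw [hC.cfc_eq, IsHermitian.cfc, Unitary.conjStarAlgAut_apply, ← Matrix.mul_assoc,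
      ← Matrix.mul_assoc, Unitary.coe_star_mul_self, Matrix.one_mul]
  rw [eigenbasisEntries_apply, ← Matrix.mul_assoc, hdiag, Matrix.mul_assoc, Matrix.mul_assoc,
    diagonal_mul, ← Matrix.mul_assoc, eigenbasisEntries_apply]
  rfl

theorem trace_conjTranspose_mul_eq_sum (hA : A.IsHermitian) (hC : C.IsHermitian)
    (X Y : Matrix n n ℂ) :
    (Xᴴ * Y).trace = ∑ i, ∑ j,
      star (eigenbasisEntries hA hC X j i) * eigenbasisEntries hA hC Y j i := by
  have hconj : (eigenbasisEntries hA hC X)ᴴ * eigenbasisEntries hA hC Y =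
      star (hA.eigenvectorUnitary : Matrix n n ℂ) * (Xᴴ * Y) * hA.eigenvectorUnitary := by
    simp only [eigenbasisEntries_apply, conjTranspose_mul, star_eq_conjTranspose,
      conjTranspose_conjTranspose, Matrix.mul_assoc]
    rw [← Matrix.mul_assoc (hC.eigenvectorUnitary : Matrix n n ℂ),
      ← star_eq_conjTranspose (hC.eigenvectorUnitary : Matrix n n ℂ),
      mem_unitaryGroup_iff.1 hC.eigenvectorUnitary.2, Matrix.one_mul]
  have htrace : (Xᴴ * Y).trace =
      ((eigenbasisEntries hA hC X)ᴴ * eigenbasisEntries hA hC Y).trace := by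
    rw [hconj, trace_mul_cycle, mem_unitaryGroup_iff.1 hA.eigenvectorUnitary.2, Matrix.one_mul]
  rw [htrace]
  simp only [trace, diag_apply, mul_apply, conjTranspose_apply]

theorem sum_norm_sq_eigenbasisEntries_one (hA : A.IsHermitian) (hC : C.IsHermitian) (i : n) :
    ∑ j, ‖eigenbasisEntries hA hC 1 j i‖ ^ 2 = 1 := by
  set W : Matrix n n ℂ := eigenbasisEntries hA hC 1 with hW
  have hunit : star W * W = 1 := by
    refine mem_unitaryGroup_iff'.1 ?_
    rw [hW, eigenbasisEntries_apply, Matrix.mul_one]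
    exact (star hC.eigenvectorUnitary * hA.eigenvectorUnitary).2
  have hdiag : (star W * W) i i = 1 := by rw [hunit, one_apply_eq]
  simp only [mul_apply, star_apply, Complex.star_def, Complex.conj_mul'] at hdiag
  exact_mod_cast hdiag

/-- The sum `∑ |⟨vⱼ, uᵢ⟩|² f (aᵢ, cⱼ)` over the eigenpairs `(aᵢ, uᵢ)` of `A` and `(cⱼ, vⱼ)` of `C`:
the trace of `f (R_A, L_C) 1`, where `R_A` and `L_C` are the commuting operators of right
multiplication by `A` and left multiplication by `C`. -/
noncomputable def jointSpectralSum (hA : A.IsHermitian) (hC : C.IsHermitian)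
    (f : ℝ → ℝ → ℝ) : ℝ :=
  ∑ i, ∑ j, ‖eigenbasisEntries hA hC 1 j i‖ ^ 2 * f (hA.eigenvalues i) (hC.eigenvalues j)

theorem jointSpectralSum_left (hA : A.IsHermitian) (hC : C.IsHermitian) (g : ℝ → ℝ) :
    jointSpectralSum hA hC (fun a _ ↦ g a) = ∑ i, g (hA.eigenvalues i) := by
  simp only [jointSpectralSum, ← Finset.sum_mul, one_mul, sum_norm_sq_eigenbasisEntries_one]

theorem jointSpectralSum_sub (hA : A.IsHermitian) (hC : C.IsHermitian) (f g : ℝ → ℝ → ℝ) :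
    jointSpectralSum hA hC (fun a c ↦ f a c - g a c) =
      jointSpectralSum hA hC f - jointSpectralSum hA hC g := by
  simp only [jointSpectralSum, mul_sub, Finset.sum_sub_distrib]

theorem re_trace_mul_cfc (hA : A.IsHermitian) (hC : C.IsHermitian) (f : ℝ → ℝ) :
    (A * cfc f C).trace.re = jointSpectralSum hA hC fun a c ↦ a * f c := by
  have hswap : (A * cfc f C).trace = ((cfc f C * 1)ᴴ * (1 * A)).trace := by
    rw [trace_mul_comm, Matrix.mul_one, Matrix.one_mul, ← star_eq_conjTranspose,
      (cfc_predicate f C : IsSelfAdjoint (cfc f C)).star_eq]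
  rw [hswap, trace_conjTranspose_mul_eq_sum hA hC, Complex.re_sum, jointSpectralSum]
  refine Finset.sum_congr rfl fun i _ ↦ ?_
  rw [Complex.re_sum]
  refine Finset.sum_congr rfl fun j _ ↦ ?_
  rw [eigenbasisEntries_cfc_mul_apply, eigenbasisEntries_mul_apply, ← Complex.normSq_eq_norm_sq]
  simp only [star_mul', Complex.star_def, Complex.conj_ofReal, Complex.mul_re, Complex.ofReal_re,
    Complex.conj_re, Complex.ofReal_im, Complex.conj_im, mul_neg, zero_mul, neg_zero, sub_zero,
    mul_zero, Complex.mul_im, add_zero, zero_add, neg_mul, sub_neg_eq_add, Complex.normSq_apply]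
  ring

theorem trace_cfc (hA : A.IsHermitian) (f : ℝ → ℝ) :
    (cfc f A).trace = ∑ i, (f (hA.eigenvalues i) : ℂ) := by
  rw [hA.cfc_eq, IsHermitian.cfc, Unitary.conjStarAlgAut_apply, trace_mul_cycle,
    Unitary.coe_star_mul_self, Matrix.one_mul, trace_diagonal]
  rfl

/-- Quantum relative entropy `Tr A (ln A - ln C)`. Since `Real.log 0 = 0`, it is the usual one only
when the kernel of `C` is contained in that of `A`. -/
noncomputable def relEntropy (A C : Matrix n n ℂ) : ℝ :=
  (A * (cfc log A - cfc log C)).trace.re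

theorem mul_cfc_log (hA : A.IsHermitian) : A * cfc log A = cfc (fun x ↦ x * log x) A := by
  rw [cfc_mul _ _ A (by fun_prop) (A.finite_real_spectrum.continuousOn _),
    cfc_id' ℝ A hA.isSelfAdjoint]

theorem entropy_eq_neg_re_trace (hA : A.IsHermitian) :
    entropy A = -(A * cfc log A).trace.re := by
  rw [entropy, dif_pos hA, mul_cfc_log hA, trace_cfc hA, Complex.re_sum, ← Finset.sum_neg_distrib]
  exact Finset.sum_congr rfl fun i _ ↦ by rw [Complex.ofReal_re, negMulLog, neg_mul]

theorem relEntropy_eq (hA : A.IsHermitian) (C : Matrix n n ℂ) :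
    relEntropy A C = -entropy A - (A * cfc log C).trace.re := by
  rw [relEntropy, Matrix.mul_sub, trace_sub, Complex.sub_re, entropy_eq_neg_re_trace hA, neg_neg]

theorem entropy_smul_add_smul {B : Matrix n n ℂ} (hA : A.IsHermitian) (hB : B.IsHermitian)
    (s t : ℝ) :
    entropy (s • A + t • B) = s * (entropy A + relEntropy A (s • A + t • B)) +
      t * (entropy B + relEntropy B (s • A + t • B)) := by
  have hC : (s • A + t • B).IsHermitian :=
    (hA.smul (IsSelfAdjoint.all s)).add (hB.smul (IsSelfAdjoint.all t))
  rw [entropy_eq_neg_re_trace hC, relEntropy_eq hA, relEntropy_eq hB, Matrix.add_mul,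
    Matrix.smul_mul, Matrix.smul_mul, trace_add, trace_smul, trace_smul, Complex.add_re,
    Complex.smul_re, Complex.smul_re, smul_eq_mul, smul_eq_mul]
  ring

/-- The function `s ↦ ⟨A, ln (L_C + s R_A) 1⟩`, which runs from `Tr A ln C` at `s = 0` to
`Tr A ln A + Tr A ln s + o(1)` at infinity. -/
noncomputable def logInterpolation (hA : A.IsHermitian) (hC : C.IsHermitian) (s : ℝ) : ℝ :=
  jointSpectralSum hA hC fun a c ↦ a * log (c + s * a)

/-- The derivative `⟨A, (L_C + s R_A)⁻¹ A⟩` of `logInterpolation`. -/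
noncomputable def resolventForm (hA : A.IsHermitian) (hC : C.IsHermitian) (s : ℝ) : ℝ :=
  jointSpectralSum hA hC fun a c ↦ a ^ 2 / (c + s * a)

theorem hasDerivAt_logInterpolation (hA : A.PosSemidef) (hC : C.PosSemidef) {s : ℝ} (hs : 0 < s) :
    HasDerivAt (logInterpolation hA.1 hC.1) (resolventForm hA.1 hC.1 s) s :=
  HasDerivAt.fun_sum fun i _ ↦ HasDerivAt.fun_sum fun j _ ↦
    (hasDerivAt_mul_log_add_mul (hA.eigenvalues_nonneg i) (hC.eigenvalues_nonneg j) hs).const_mul _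

theorem logInterpolation_zero (hA : A.IsHermitian) (hC : C.IsHermitian) :
    logInterpolation hA hC 0 = (A * cfc log C).trace.re := by
  simp only [logInterpolation, zero_mul, add_zero, re_trace_mul_cfc hA hC]

theorem tendsto_logInterpolation_sub (hA : A.PosSemidef) (hC : C.IsHermitian) :
    Tendsto (fun s ↦ logInterpolation hA.1 hC s - A.trace.re * log s) atTop (𝓝 (-entropy A)) := by
  have hsum : Tendsto
      (fun s ↦ jointSpectralSum hA.1 hC fun a c ↦ a * log (c + s * a) - a * log s) atTop
      (𝓝 (jointSpectralSum hA.1 hC fun a _ ↦ a * log a)) :=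
    tendsto_finsetSum _ fun i _ ↦ tendsto_finsetSum _ fun j _ ↦
      (tendsto_mul_log_add_mul_sub_mul_log (hA.eigenvalues_nonneg i) _).const_mul _
  convert hsum using 2 with s
  · rw [jointSpectralSum_sub, jointSpectralSum_left hA.1 hC fun a ↦ a * log s, ← Finset.sum_mul,
      logInterpolation, hA.1.trace_eq_sum_eigenvalues]
    simp only [Complex.coe_algebraMap, Complex.re_sum, Complex.ofReal_re]
  · simp only [jointSpectralSum_left, entropy, dif_pos hA.1, negMulLog, neg_mul,
      Finset.sum_neg_distrib, neg_neg]

theorem norm_sq_eigenbasisEntries_one_mul_eigenvalues (hA : A.IsHermitian) (hC : C.IsHermitian)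
    {i j : n} (hker : A *ᵥ hC.eigenvectorBasis j = 0) :
    ‖eigenbasisEntries hA hC 1 j i‖ ^ 2 * hA.eigenvalues i = 0 := by
  have hadj : star (hC.eigenvectorUnitary : Matrix n n ℂ) * A =
      (A * (hC.eigenvectorUnitary : Matrix n n ℂ))ᴴ := by
    rw [conjTranspose_mul, hA.eq, star_eq_conjTranspose]
  have hrow (l : n) : (star (hC.eigenvectorUnitary : Matrix n n ℂ) * A) j l = 0 := by
    have hcol : (A * (hC.eigenvectorUnitary : Matrix n n ℂ)) l j =
        (A *ᵥ hC.eigenvectorBasis j) l := rfl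
    rw [hadj, conjTranspose_apply, hcol, hker, Pi.zero_apply, star_zero]
  have hentry : eigenbasisEntries hA hC A j i = 0 := by
    rw [eigenbasisEntries_apply, mul_apply]
    simp only [hrow, zero_mul, Finset.sum_const_zero]
  have hmul := eigenbasisEntries_mul_apply hA hC 1 i j
  rw [Matrix.one_mul, hentry, eq_comm, mul_eq_zero, Complex.ofReal_eq_zero] at hmul
  rcases hmul with h | h <;> simp [h]

theorem continuousOn_logInterpolation {τ : ℝ} (hτ : 0 < τ) (hA : A.PosSemidef)
    (hC : C.PosSemidef) (hAC : (C - τ • A).PosSemidef) :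
    ContinuousOn (logInterpolation hA.1 hC.1) (Set.Ici 0) := by
  refine continuousOn_finsetSum _ fun i _ ↦ continuousOn_finsetSum _ fun j _ ↦
    continuousOn_mul_log_add_mul (hA.eigenvalues_nonneg i) (hC.eigenvalues_nonneg j) fun hj ↦ ?_
  refine norm_sq_eigenbasisEntries_one_mul_eigenvalues hA.1 hC.1
    (mulVec_eq_zero_of_posSemidef_sub hτ hA hAC ?_)
  rw [hC.1.mulVec_eigenvectorBasis, hj, zero_smul]

/-- The concave quadratic form `2 Re ⟨X, A⟩ - ⟨X, (L_C + s R_A) X⟩`, whose maximum is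
`⟨A, (L_C + s R_A)⁻¹ A⟩`. -/
noncomputable def variationalForm (A C : Matrix n n ℂ) (s : ℝ) (X : Matrix n n ℂ) : ℝ :=
  2 * (Xᴴ * A).trace.re - (X * Xᴴ * C).trace.re - s * (Xᴴ * X * A).trace.re

theorem variationalForm_eq_sum (hA : A.IsHermitian) (hC : C.IsHermitian) (s : ℝ)
    (X : Matrix n n ℂ) :
    variationalForm A C s X = ∑ i, ∑ j,
      (2 * (star (eigenbasisEntries hA hC X j i) *
          (hA.eigenvalues i • eigenbasisEntries hA hC 1 j i)).re -
        (hC.eigenvalues j + s * hA.eigenvalues i) * ‖eigenbasisEntries hA hC X j i‖ ^ 2) := by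
  have hlin : (Xᴴ * A).trace = (Xᴴ * (1 * A)).trace := by rw [Matrix.one_mul]
  have hleft : (X * Xᴴ * C).trace = (Xᴴ * (cfc (id : ℝ → ℝ) C * X)).trace := by
    rw [cfc_id ℝ C hC.isSelfAdjoint, trace_mul_cycle', Matrix.mul_assoc, trace_mul_cycle']
  rw [variationalForm, hlin, hleft, Matrix.mul_assoc]
  simp only [trace_conjTranspose_mul_eq_sum hA hC, eigenbasisEntries_mul_apply,
    eigenbasisEntries_cfc_mul_apply, Complex.re_sum, Finset.mul_sum, ← Finset.sum_sub_distrib]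
  refine Finset.sum_congr rfl fun i _ ↦ Finset.sum_congr rfl fun j _ ↦ ?_
  rw [← Complex.normSq_eq_norm_sq, Complex.normSq_apply]
  simp only [Complex.star_def, Complex.mul_re, Complex.conj_re, Complex.ofReal_re,
    Complex.ofReal_im, mul_zero, sub_zero, Complex.conj_im, Complex.mul_im, zero_add, neg_mul,
    sub_neg_eq_add, id_eq, zero_mul, add_zero, Complex.real_smul]
  ring

theorem isGreatest_variationalForm (hA : A.PosSemidef) (hC : C.PosSemidef) {s : ℝ} (hs : 0 < s) :
    IsGreatest (Set.range (variationalForm A C s)) (resolventForm hA.1 hC.1 s) := by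
  constructor
  · refine ⟨(eigenbasisEntries hA.1 hC.1).symm (of fun j i ↦
      (hA.1.eigenvalues i / (hC.1.eigenvalues j + s * hA.1.eigenvalues i)) •
        eigenbasisEntries hA.1 hC.1 1 j i), ?_⟩
    rw [variationalForm_eq_sum hA.1 hC.1, LinearEquiv.apply_symm_apply]
    exact Finset.sum_congr rfl fun i _ ↦ Finset.sum_congr rfl fun j _ ↦
      two_mul_re_star_smul_mul_sub_eq (hA.eigenvalues_nonneg i) (hC.eigenvalues_nonneg j) hs _
  · rintro _ ⟨X, rfl⟩
    rw [variationalForm_eq_sum hA.1 hC.1]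
    exact Finset.sum_le_sum fun i _ ↦ Finset.sum_le_sum fun j _ ↦
      two_mul_re_star_mul_sub_le (hA.eigenvalues_nonneg i) (hC.eigenvalues_nonneg j) hs _ _

end JointSpectrum

open scoped MatrixOrder in
theorem re_trace_mul_nonneg {n : Type*} [Fintype n] {A B : Matrix n n ℂ}
    (hA : A.PosSemidef) (hB : B.PosSemidef) : 0 ≤ (A * B).trace.re := by
  classical
  obtain ⟨S, rfl⟩ := CStarAlgebra.nonneg_iff_eq_star_mul_self.mp hA.nonneg
  rw [star_eq_conjTranspose, Matrix.mul_assoc, trace_mul_comm]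
  exact (Complex.nonneg_iff.1 (hB.mul_mul_conjTranspose_same S).trace_nonneg).1

/-- A positive map `Φ` into a finite direct sum of matrix algebras, together with its adjoint `Ψ`
for the trace pairing, which is unital and satisfies the Kadison–Schwarz inequality. -/
structure IsSchwarzChannel {ι m k : Type*} [Fintype ι] [Fintype m] [Fintype k] [DecidableEq m]
    [DecidableEq k] (Φ : Matrix m m ℂ →ₗ[ℂ] (ι → Matrix k k ℂ))
    (Ψ : (ι → Matrix k k ℂ) → Matrix m m ℂ) : Prop where
  posSemidef_map {A : Matrix m m ℂ} : A.PosSemidef → ∀ α, (Φ A α).PosSemidef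
  trace_dual_mul (Y : ι → Matrix k k ℂ) (A : Matrix m m ℂ) :
    (Ψ Y * A).trace = ∑ α, (Y α * Φ A α).trace
  dual_one : Ψ 1 = 1
  dual_conjTranspose (Y : ι → Matrix k k ℂ) : Ψ (fun α ↦ (Y α)ᴴ) = (Ψ Y)ᴴ
  schwarz (Y : ι → Matrix k k ℂ) : (Ψ (fun α ↦ Y α * (Y α)ᴴ) - Ψ Y * (Ψ Y)ᴴ).PosSemidef

namespace IsSchwarzChannel

variable {ι m k : Type*} [Fintype ι] [Fintype m] [Fintype k] [DecidableEq m] [DecidableEq k]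
  {Φ : Matrix m m ℂ →ₗ[ℂ] (ι → Matrix k k ℂ)} {Ψ : (ι → Matrix k k ℂ) → Matrix m m ℂ}
  {A C : Matrix m m ℂ} {s : ℝ}

theorem sum_trace_map (h : IsSchwarzChannel Φ Ψ) (A : Matrix m m ℂ) :
    ∑ α, (Φ A α).trace = A.trace := by
  simpa only [h.dual_one, Pi.one_apply, Matrix.one_mul] using (h.trace_dual_mul 1 A).symm

theorem re_trace_dual_mul_conjTranspose_le (h : IsSchwarzChannel Φ Ψ) (hA : A.PosSemidef)
    (Y : ι → Matrix k k ℂ) :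
    (Ψ Y * (Ψ Y)ᴴ * A).trace.re ≤ ∑ α, (Y α * (Y α)ᴴ * Φ A α).trace.re := by
  have hnonneg := re_trace_mul_nonneg (h.schwarz Y) hA
  rw [Matrix.sub_mul, trace_sub, Complex.sub_re, h.trace_dual_mul, Complex.re_sum] at hnonneg
  exact sub_nonneg.1 hnonneg

theorem sum_variationalForm_le (h : IsSchwarzChannel Φ Ψ) (hA : A.PosSemidef) (hC : C.PosSemidef)
    (hs : 0 ≤ s) (Y : ι → Matrix k k ℂ) :
    ∑ α, variationalForm (Φ A α) (Φ C α) s (Y α) ≤ variationalForm A C s (Ψ Y) := by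
  have hlinear : ((Ψ Y)ᴴ * A).trace.re = ∑ α, ((Y α)ᴴ * Φ A α).trace.re := by
    rw [← h.dual_conjTranspose, h.trace_dual_mul, Complex.re_sum]
  have hleft := h.re_trace_dual_mul_conjTranspose_le hC Y
  have hright := h.re_trace_dual_mul_conjTranspose_le hA fun α ↦ (Y α)ᴴ
  simp only [h.dual_conjTranspose, conjTranspose_conjTranspose] at hright
  simp only [variationalForm, Finset.sum_sub_distrib, ← Finset.mul_sum, hlinear]
  gcongr

theorem sum_resolventForm_le (h : IsSchwarzChannel Φ Ψ) (hA : A.PosSemidef) (hC : C.PosSemidef)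
    (hs : 0 < s) :
    ∑ α, resolventForm (h.posSemidef_map hA α).1 (h.posSemidef_map hC α).1 s ≤
      resolventForm hA.1 hC.1 s := by
  choose Y hY using fun α ↦
    (isGreatest_variationalForm (h.posSemidef_map hA α) (h.posSemidef_map hC α) hs).1
  simp only [← hY]
  exact (h.sum_variationalForm_le hA hC hs.le Y).trans
    ((isGreatest_variationalForm hA hC hs).2 ⟨Ψ Y, rfl⟩)

theorem monotoneOn_logInterpolation_sub_sum (h : IsSchwarzChannel Φ Ψ) (hA : A.PosSemidef)
    (hC : C.PosSemidef) {τ : ℝ} (hτ : 0 < τ) (hAC : (C - τ • A).PosSemidef) :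
    MonotoneOn (fun s ↦ logInterpolation hA.1 hC.1 s -
      ∑ α, logInterpolation (h.posSemidef_map hA α).1 (h.posSemidef_map hC α).1 s) (Set.Ici 0) := by
  have hmapAC (α : ι) : (Φ C α - τ • Φ A α).PosSemidef := by
    simpa only [← Complex.coe_smul, map_sub, map_smul, Pi.sub_apply, Pi.smul_apply] using
      h.posSemidef_map hAC α
  have hderiv {s : ℝ} (hs : 0 < s) := (hasDerivAt_logInterpolation hA hC hs).fun_sub <|
    HasDerivAt.fun_sum (u := Finset.univ) fun α _ ↦
      hasDerivAt_logInterpolation (h.posSemidef_map hA α) (h.posSemidef_map hC α) hs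
  refine monotoneOn_of_deriv_nonneg (convex_Ici 0) ?_ ?_ ?_
  · exact (continuousOn_logInterpolation hτ hA hC hAC).sub <| continuousOn_finsetSum _ fun α _ ↦
      continuousOn_logInterpolation hτ (h.posSemidef_map hA α) (h.posSemidef_map hC α) (hmapAC α)
  · rw [interior_Ici]
    exact fun s hs ↦ (hderiv hs).differentiableAt.differentiableWithinAt
  · rw [interior_Ici]
    intro s hs
    rw [(hderiv hs).deriv]
    exact sub_nonneg.2 (h.sum_resolventForm_le hA hC hs)

theorem tendsto_logInterpolation_sub_sum (h : IsSchwarzChannel Φ Ψ) (hA : A.PosSemidef)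
    (hC : C.PosSemidef) :
    Tendsto (fun s ↦ logInterpolation hA.1 hC.1 s -
        ∑ α, logInterpolation (h.posSemidef_map hA α).1 (h.posSemidef_map hC α).1 s) atTop
      (𝓝 (-entropy A - ∑ α, -entropy (Φ A α))) := by
  have htrace : ∑ α, (Φ A α).trace.re = A.trace.re := by
    rw [← Complex.re_sum, h.sum_trace_map]
  refine ((tendsto_logInterpolation_sub hA hC.1).sub <| tendsto_finsetSum Finset.univ fun α _ ↦
    tendsto_logInterpolation_sub (h.posSemidef_map hA α) (h.posSemidef_map hC α).1).congr
    fun s ↦ ?_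
  rw [Finset.sum_sub_distrib, ← Finset.sum_mul, htrace, sub_sub_sub_cancel_right]

theorem sum_relEntropy_le (h : IsSchwarzChannel Φ Ψ) (hA : A.PosSemidef) (hC : C.PosSemidef)
    {τ : ℝ} (hτ : 0 < τ) (hAC : (C - τ • A).PosSemidef) :
    ∑ α, relEntropy (Φ A α) (Φ C α) ≤ relEntropy A C := by
  have hzero_le := ge_of_tendsto (h.tendsto_logInterpolation_sub_sum hA hC) <| by
    filter_upwards [eventually_ge_atTop 0] with s hs
    exact h.monotoneOn_logInterpolation_sub_sum hA hC hτ hAC Set.self_mem_Ici hs hs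
  simp only [logInterpolation_zero] at hzero_le
  simp only [relEntropy_eq hA.1, relEntropy_eq (h.posSemidef_map hA _).1, Finset.sum_sub_distrib]
  linarith

theorem convexOn_sum_entropy_sub_entropy (h : IsSchwarzChannel Φ Ψ) :
    ConvexOn ℝ {ρ : Matrix m m ℂ | ρ.PosSemidef}
      fun ρ ↦ ∑ α, entropy (Φ ρ α) - entropy ρ := by
  have hconvex : Convex ℝ {ρ : Matrix m m ℂ | ρ.PosSemidef} :=
    fun A hA B hB s t hs ht _ ↦ (hA.smul hs).add (hB.smul ht)
  refine ⟨hconvex, fun A hA B hB s t hs ht hst ↦ ?_⟩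
  have hC : (s • A + t • B).PosSemidef := hconvex hA hB hs ht hst
  have hmono {D : Matrix m m ℂ} (hD : D.PosSemidef) {r : ℝ} (hr : 0 ≤ r)
      (hDC : (s • A + t • B - r • D).PosSemidef) :
      r * ∑ α, relEntropy (Φ D α) (Φ (s • A + t • B) α) ≤ r * relEntropy D (s • A + t • B) := by
    rcases hr.eq_or_lt with rfl | hr
    · simp only [zero_mul, le_refl]
    · exact mul_le_mul_of_nonneg_left (h.sum_relEntropy_le hD hC hr hDC) hr.le
  have hmonoA := hmono hA hs (by simpa only [add_sub_cancel_left] using hB.smul ht)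
  have hmonoB := hmono hB ht (by simpa only [add_sub_cancel_right] using hA.smul hs)
  have hmix (α : ι) : Φ (s • A + t • B) α = s • Φ A α + t • Φ B α := by
    simp only [← Complex.coe_smul, map_add, map_smul, Pi.add_apply, Pi.smul_apply]
  have hentropy (α : ι) := entropy_smul_add_smul (h.posSemidef_map hA α).1
    (h.posSemidef_map hB α).1 s t
  simp only [hmix] at hmonoA hmonoB
  simp only [hmix, hentropy, entropy_smul_add_smul hA.1 hB.1, Finset.sum_add_distrib,
    ← Finset.mul_sum, smul_eq_mul]
  linarith

end IsSchwarzChannel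

section PartialTrace

variable {m k : Type*} [Fintype m]

theorem ptraceFst_eq_sum_submatrix (ρ : Matrix (m × k) (m × k) ℂ) :
    ptraceFst ρ = ∑ a, ρ.submatrix (Prod.mk a) (Prod.mk a) := by
  ext i j
  simp only [ptraceFst, of_apply, Matrix.sum_apply, submatrix_apply]

theorem posSemidef_ptraceFst {ρ : Matrix (m × k) (m × k) ℂ} (hρ : ρ.PosSemidef) :
    (ptraceFst ρ).PosSemidef := by
  rw [ptraceFst_eq_sum_submatrix]
  exact posSemidef_sum _ fun a _ ↦ hρ.submatrix _

variable [Fintype k]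

theorem trace_one_kronecker_mul [DecidableEq m] (Y : Matrix k k ℂ)
    (ρ : Matrix (m × k) (m × k) ℂ) :
    (((1 : Matrix m m ℂ) ⊗ₖ Y) * ρ).trace = (Y * ptraceFst ρ).trace := by
  simp only [trace, diag_apply, mul_apply, kroneckerMap_apply, Fintype.sum_prod_type, one_apply,
    ite_mul, one_mul, zero_mul, ptraceFst, of_apply, Finset.mul_sum, Finset.sum_ite_irrel,
    Finset.sum_const_zero, Finset.sum_ite_eq, Finset.mem_univ, if_true]
  rw [Finset.sum_comm]
  exact Finset.sum_congr rfl fun i _ ↦ Finset.sum_comm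

variable [DecidableEq k]

theorem ptraceFst_kronecker_one_mul (Q : Matrix m m ℂ) (ρ : Matrix (m × k) (m × k) ℂ) :
    ptraceFst ((Q ⊗ₖ (1 : Matrix k k ℂ)) * ρ) = ptraceFst (ρ * (Q ⊗ₖ (1 : Matrix k k ℂ))) := by
  ext i j
  simp only [ptraceFst, of_apply, mul_apply, kroneckerMap_apply, Fintype.sum_prod_type, one_apply,
    mul_ite, mul_one, mul_zero, ite_mul, zero_mul, Finset.sum_ite_eq, Finset.sum_ite_eq',
    Finset.mem_univ, if_true]
  rw [Finset.sum_comm]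
  simp only [mul_comm]

open scoped MatrixOrder in
theorem posSemidef_ptraceFst_kronecker_one_mul {P : Matrix m m ℂ} (hP : P.PosSemidef)
    {ρ : Matrix (m × k) (m × k) ℂ} (hρ : ρ.PosSemidef) :
    (ptraceFst ((P ⊗ₖ (1 : Matrix k k ℂ)) * ρ)).PosSemidef := by
  classical
  obtain ⟨Q, rfl⟩ := CStarAlgebra.nonneg_iff_eq_star_mul_self.mp hP.nonneg
  have hfactor : (star Q * Q) ⊗ₖ (1 : Matrix k k ℂ) =
      (Q ⊗ₖ (1 : Matrix k k ℂ))ᴴ * (Q ⊗ₖ (1 : Matrix k k ℂ)) := by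
    rw [conjTranspose_kronecker, conjTranspose_one, ← mul_kronecker_mul, Matrix.one_mul,
      star_eq_conjTranspose]
  rw [hfactor, conjTranspose_kronecker, conjTranspose_one, Matrix.mul_assoc,
    ptraceFst_kronecker_one_mul]
  have hconj := posSemidef_ptraceFst (hρ.mul_mul_conjTranspose_same (Q ⊗ₖ (1 : Matrix k k ℂ)))
  rwa [conjTranspose_kronecker, conjTranspose_one] at hconj

end PartialTrace

section Measurement

variable {ι m k : Type*} [Fintype ι]

/-- The Heisenberg picture `Y ↦ ∑ P α ⊗ Y α` of the measurement `P`: the adjoint of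
`measurementMap P` for the trace pairing. -/
noncomputable def measurementDual (P : ι → Matrix m m ℂ) (Y : ι → Matrix k k ℂ) :
    Matrix (m × k) (m × k) ℂ :=
  ∑ α, P α ⊗ₖ Y α

theorem measurementDual_conjTranspose {P : ι → Matrix m m ℂ} (hP : ∀ α, (P α).IsHermitian)
    (Y : ι → Matrix k k ℂ) :
    measurementDual P (fun α ↦ (Y α)ᴴ) = (measurementDual P Y)ᴴ := by
  simp only [measurementDual, conjTranspose_sum, conjTranspose_kronecker, (hP _).eq]

variable [DecidableEq k]

theorem measurementDual_one [DecidableEq m] {P : ι → Matrix m m ℂ} (hPsum : ∑ α, P α = 1) :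
    measurementDual P (1 : ι → Matrix k k ℂ) = 1 := by
  rw [← one_kronecker_one, ← hPsum]
  ext i j
  simp only [measurementDual, Pi.one_apply, Matrix.sum_apply, kroneckerMap_apply, Finset.sum_mul]

variable [Fintype m] [Fintype k]

/-- The unnormalised states of the second factor after measuring the POVM `P` on the first, one for
each outcome. -/
noncomputable def measurementMap (P : ι → Matrix m m ℂ) :
    Matrix (m × k) (m × k) ℂ →ₗ[ℂ] (ι → Matrix k k ℂ) where
  toFun ρ α := ptraceFst ((P α ⊗ₖ (1 : Matrix k k ℂ)) * ρ)
  map_add' ρ σ := by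
    ext α : 1
    simp only [ptraceFst_eq_sum_submatrix, Matrix.mul_add, submatrix_add, Pi.add_apply,
      Finset.sum_add_distrib]
  map_smul' r ρ := by
    ext α : 1
    simp only [ptraceFst_eq_sum_submatrix, Matrix.mul_smul, submatrix_smul, Pi.smul_apply,
      Finset.smul_sum, RingHom.id_apply]

theorem trace_measurementDual_mul (P : ι → Matrix m m ℂ) (Y : ι → Matrix k k ℂ)
    (ρ : Matrix (m × k) (m × k) ℂ) :
    (measurementDual P Y * ρ).trace = ∑ α, (Y α * measurementMap P ρ α).trace := by
  classical
  rw [measurementDual, Matrix.sum_mul, trace_sum]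
  refine Finset.sum_congr rfl fun α _ ↦ ?_
  have hsplit : P α ⊗ₖ Y α = ((1 : Matrix m m ℂ) ⊗ₖ Y α) * (P α ⊗ₖ (1 : Matrix k k ℂ)) := by
    rw [← mul_kronecker_mul, Matrix.one_mul, Matrix.mul_one]
  rw [hsplit, Matrix.mul_assoc, trace_one_kronecker_mul]
  rfl

theorem measurementDual_mul_conjTranspose_sub [DecidableEq m] {P : ι → Matrix m m ℂ}
    (hP : ∀ α, (P α).IsHermitian) (hPsum : ∑ α, P α = 1) (Y : ι → Matrix k k ℂ) :
    measurementDual P (fun α ↦ Y α * (Y α)ᴴ) - measurementDual P Y * (measurementDual P Y)ᴴ =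
      ∑ α, ((1 : Matrix m m ℂ) ⊗ₖ Y α - measurementDual P Y) * (P α ⊗ₖ (1 : Matrix k k ℂ)) *
        ((1 : Matrix m m ℂ) ⊗ₖ Y α - measurementDual P Y)ᴴ := by
  set X := measurementDual P Y with hX
  have hXstar : ∑ α, P α ⊗ₖ (Y α)ᴴ = Xᴴ := measurementDual_conjTranspose hP Y
  have hone : ∑ α, P α ⊗ₖ (1 : Matrix k k ℂ) = 1 := measurementDual_one hPsum
  have hexpand (α : ι) : ((1 : Matrix m m ℂ) ⊗ₖ Y α - X) * (P α ⊗ₖ (1 : Matrix k k ℂ)) *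
      ((1 : Matrix m m ℂ) ⊗ₖ Y α - X)ᴴ =
      P α ⊗ₖ (Y α * (Y α)ᴴ) - (P α ⊗ₖ Y α) * Xᴴ - X * (P α ⊗ₖ (Y α)ᴴ) +
        X * (P α ⊗ₖ (1 : Matrix k k ℂ)) * Xᴴ := by
    rw [conjTranspose_sub, conjTranspose_kronecker, conjTranspose_one, Matrix.sub_mul,
      Matrix.mul_sub, Matrix.sub_mul, Matrix.sub_mul, ← mul_kronecker_mul, ← mul_kronecker_mul,
      Matrix.mul_assoc X, ← mul_kronecker_mul]
    simp only [Matrix.one_mul, Matrix.mul_one]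
    abel
  simp only [hexpand, Finset.sum_add_distrib, Finset.sum_sub_distrib, ← Matrix.sum_mul,
    ← Matrix.mul_sum, hone, hXstar, Matrix.mul_one]
  rw [hX, measurementDual, measurementDual]
  abel

theorem isSchwarzChannel_measurementMap [DecidableEq m] {P : ι → Matrix m m ℂ}
    (hP : ∀ α, (P α).PosSemidef) (hPsum : ∑ α, P α = 1) :
    IsSchwarzChannel (measurementMap (k := k) P) (measurementDual P) where
  posSemidef_map hρ α := posSemidef_ptraceFst_kronecker_one_mul (hP α) hρ
  trace_dual_mul := trace_measurementDual_mul P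
  dual_one := measurementDual_one hPsum
  dual_conjTranspose := measurementDual_conjTranspose fun α ↦ (hP α).1
  schwarz Y := by
    rw [measurementDual_mul_conjTranspose_sub (fun α ↦ (hP α).1) hPsum]
    exact posSemidef_sum _ fun α _ ↦
      ((hP α).kronecker PosSemidef.one).mul_mul_conjTranspose_same _

theorem classical_minus_quantum_entropy_convex_general [DecidableEq m] {P : ι → Matrix m m ℂ}
    (hP : ∀ α, (P α).PosSemidef) (hPsum : ∑ α, P α = 1) :
    ConvexOn ℝ {ρ : Matrix (m × k) (m × k) ℂ | ρ.PosSemidef} fun ρ ↦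
      ∑ α, entropy (ptraceFst ((P α ⊗ₖ (1 : Matrix k k ℂ)) * ρ)) - entropy ρ :=
  (isSchwarzChannel_measurementMap hP hPsum).convexOn_sum_entropy_sub_entropy

end Measurement

/-- **Convexity of classical minus quantum entropy** (Corollary 6): the map
`ρ₁₂ ↦ S^{cl,Q}[ρ₁₂] − S[ρ₁₂]` is convex on density matrices. -/
theorem classical_minus_quantum_entropy_convex
    {n₁ n₂ : Type*} [Fintype n₁] [Fintype n₂]
    [DecidableEq n₁] [DecidableEq n₂] {M : ℕ}
    (P : Fin M → Matrix n₁ n₁ ℂ) (hP : ∀ α, (P α).PosSemidef)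
    (hPsum : ∑ α, P α = 1)
    (A B : Matrix (n₁ × n₂) (n₁ × n₂) ℂ)
    (hA : A.PosSemidef) (hAtr : A.trace = 1)
    (hB : B.PosSemidef) (hBtr : B.trace = 1)
    (t : ℝ) (ht0 : 0 ≤ t) (ht1 : t ≤ 1) :
    (∑ α, entropy (ptraceFst ((P α ⊗ₖ (1 : Matrix n₂ n₂ ℂ)) *
          ((t : ℂ) • A + ((1 - t : ℝ) : ℂ) • B))))
      - entropy ((t : ℂ) • A + ((1 - t : ℝ) : ℂ) • B)
    ≤ t * ((∑ α, entropy (ptraceFst ((P α ⊗ₖ (1 : Matrix n₂ n₂ ℂ)) * A)))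
            - entropy A)
      + (1 - t) * ((∑ α, entropy (ptraceFst ((P α ⊗ₖ (1 : Matrix n₂ n₂ ℂ)) * B)))
            - entropy B) := by
  simpa only [← Complex.coe_smul, smul_eq_mul] using
    (classical_minus_quantum_entropy_convex_general hP hPsum).2 hA hB ht0 (sub_nonneg.2 ht1)
      (add_sub_cancel t 1)
end

section
/- The infimum of Wehrl minus quantum entropy is zero and is attained at the maximally mixed state: Let H be a finite-dimensional complex Hilbert space of dimension d ≥ 1, (Ω,μ) a measure space, and a ↦ φ_a ∈ H a measurable family of unit vectors with ∫_Ω |φ_a⟩⟨φ_a| dμ(a) = id_H (Bochner integral). Define S^W[ρ] = ∫_Ω φ( ⟨φ_a, ρ φ_a⟩ ) dμ(a) for density matrices ρ on H, where φ(x) = −x ln x (with φ(0)=0). Then S^W[ρ] − S[ρ] ≥ 0 for every density matrix ρ on H, and S^W[(1/d)·id_H] − S[(1/d)·id_H] = 0 (indeed S^W[(1/d)·id_H] = ln d = S[(1/d)·id_H]). -/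
open Matrix Kronecker Real
open scoped ComplexOrder

open MeasureTheory

/-- Wehrl entropy of `ρ` with respect to the family of coherent states `φ`. -/
noncomputable def wehrlEntropy {n Ω : Type*} [Fintype n] [MeasurableSpace Ω]
    (μ : Measure Ω) (φ : Ω → n → ℂ) (ρ : Matrix n n ℂ) : ℝ :=
  ∫ a, Real.negMulLog ((star (φ a) ⬝ᵥ ρ *ᵥ (φ a)).re) ∂μ

/-!
Fix a positive semidefinite `ρ` with eigenvalues `λ i` and eigenvectors `b i`. For a unit vector
`x`, the numbers `p i = |⟨b i, x⟩|²` are probabilities and `⟨x, ρ x⟩ = ∑ p i * λ i`, so Jensen's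
inequality for the concave function `-t ln t` bounds `-⟨x, ρ x⟩ ln ⟨x, ρ x⟩` from below by
`∑ p i * (-λ i ln λ i)`. Integrating over `x = φ a`, each `p i` contributes `‖b i‖² = 1` because
the family `φ` resolves the identity. This is the Berezin–Lieb inequality `S[ρ] ≤ S^W[ρ]`. When `ρ`
is a scalar matrix all expectations and eigenvalues agree, and both entropies can be read off from
`μ(Ω) = tr 1 = d`.
-/

section BerezinLieb

variable {𝕜 n Ω : Type*} [RCLike 𝕜] [MeasurableSpace Ω]

/-- The family of vectors `φ` resolves the identity, `∫ |φ a⟩⟨φ a| dμ(a) = 1`. The matrix-valued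
integral is encoded entry by entry, each entry being required to be integrable. -/
structure ResolvesIdentity [DecidableEq n] (μ : Measure Ω) (φ : Ω → n → 𝕜) : Prop where
  integrable (i j : n) : Integrable (fun a => φ a i * (starRingEnd 𝕜) (φ a j)) μ
  integral_eq_one (i j : n) :
    ∫ a, φ a i * (starRingEnd 𝕜) (φ a j) ∂μ = (1 : Matrix n n 𝕜) i j

variable [Fintype n]

lemma dotProduct_mulVec_eq_sum (A : Matrix n n 𝕜) (x : n → 𝕜) :
    star x ⬝ᵥ A *ᵥ x = ∑ i, ∑ j, A i j * (x j * (starRingEnd 𝕜) (x i)) := by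
  simp only [dotProduct, mulVec, Finset.mul_sum, Pi.star_apply, starRingEnd_apply]
  exact Finset.sum_congr rfl fun i _ => Finset.sum_congr rfl fun j _ => by ring

lemma re_dotProduct_vecMulVec_star_mulVec (v x : n → 𝕜) :
    RCLike.re (star x ⬝ᵥ vecMulVec v (star v) *ᵥ x) = ‖star v ⬝ᵥ x‖ ^ 2 := by
  rw [vecMulVec_mulVec, op_smul_eq_smul, dotProduct_smul, smul_eq_mul, star_dotProduct,
    ← starRingEnd_apply, RCLike.conj_mul, RCLike.norm_conj]
  norm_cast

variable [DecidableEq n]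

section BornWeight

variable {A : Matrix n n 𝕜}

/-- The Born weight of the vector `x` on the `i`-th eigenvector `b i` of a Hermitian matrix `A`,
namely `|⟨b i, x⟩|²`: for a unit vector `x`, the probability that a measurement of `A` in the state
`x` selects `b i`. The eigenvectors are those of Mathlib's chosen basis `eigenvectorBasis`. -/
noncomputable def bornWeight (hA : A.IsHermitian) (x : n → 𝕜) (i : n) : ℝ :=
  ‖star (hA.eigenvectorBasis i).ofLp ⬝ᵥ x‖ ^ 2

lemma bornWeight_nonneg (hA : A.IsHermitian) (x : n → 𝕜) (i : n) : 0 ≤ bornWeight hA x i :=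
  sq_nonneg _

lemma sum_bornWeight (hA : A.IsHermitian) (x : n → 𝕜) :
    ∑ i, bornWeight hA x i = RCLike.re (star x ⬝ᵥ x) := by
  have parseval := hA.eigenvectorBasis.sum_sq_norm_inner_right (WithLp.toLp 2 x)
  rw [← inner_self_eq_norm_sq (𝕜 := 𝕜)] at parseval
  simpa only [bornWeight, EuclideanSpace.inner_eq_star_dotProduct, dotProduct_comm x] using parseval

lemma sum_bornWeight_mul_eigenvalues (hA : A.IsHermitian) (x : n → 𝕜) :
    ∑ i, bornWeight hA x i * hA.eigenvalues i = RCLike.re (star x ⬝ᵥ A *ᵥ x) := by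
  have dotProduct_eigenvector_mulVec (i : n) : star (hA.eigenvectorBasis i).ofLp ⬝ᵥ A *ᵥ x =
      hA.eigenvalues i * (star (hA.eigenvectorBasis i).ofLp ⬝ᵥ x) := by
    have vecMul_eq : star (hA.eigenvectorBasis i).ofLp ᵥ* A =
        star (A *ᵥ (hA.eigenvectorBasis i).ofLp) := by
      rw [star_mulVec, hA.eq]
    rw [dotProduct_mulVec, vecMul_eq, hA.mulVec_eigenvectorBasis, star_smul, star_trivial,
      smul_dotProduct, RCLike.real_smul_eq_coe_mul]
  have parseval :=
    hA.eigenvectorBasis.sum_inner_mul_inner (WithLp.toLp 2 x) (WithLp.toLp 2 (A *ᵥ x))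
  simp only [EuclideanSpace.inner_eq_star_dotProduct, dotProduct_comm _ (star _),
    dotProduct_eigenvector_mulVec] at parseval
  rw [← parseval, map_sum]
  refine Finset.sum_congr rfl fun i _ => ?_
  rw [star_dotProduct, mul_left_comm, ← starRingEnd_apply, RCLike.conj_mul, bornWeight]
  norm_cast
  rw [mul_comm]

variable {x : n → 𝕜}

lemma re_dotProduct_mulVec_mem_convexHull (hA : A.IsHermitian) (hx : star x ⬝ᵥ x = 1) :
    RCLike.re (star x ⬝ᵥ A *ᵥ x) ∈ convexHull ℝ (Set.range hA.eigenvalues) := by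
  rw [← sum_bornWeight_mul_eigenvalues hA]
  exact (convex_convexHull ℝ _).sum_mem (fun i _ => bornWeight_nonneg hA x i)
    (by rw [sum_bornWeight, hx, RCLike.one_re])
    (fun i _ => subset_convexHull ℝ _ (Set.mem_range_self i))

lemma sum_bornWeight_mul_map_le {s : Set ℝ} {f : ℝ → ℝ} (hf : ConcaveOn ℝ s f)
    (hA : A.IsHermitian) (hs : ∀ i, hA.eigenvalues i ∈ s) (hx : star x ⬝ᵥ x = 1) :
    ∑ i, bornWeight hA x i * f (hA.eigenvalues i) ≤ f (RCLike.re (star x ⬝ᵥ A *ᵥ x)) := by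
  rw [← sum_bornWeight_mul_eigenvalues hA]
  exact hf.le_map_sum (fun i _ => bornWeight_nonneg hA x i)
    (by rw [sum_bornWeight, hx, RCLike.one_re]) (fun i _ => hs i)

end BornWeight

namespace ResolvesIdentity

variable {μ : Measure Ω} {φ : Ω → n → 𝕜}

lemma integrable_dotProduct_mulVec (hφ : ResolvesIdentity μ φ) (A : Matrix n n 𝕜) :
    Integrable (fun a => star (φ a) ⬝ᵥ A *ᵥ φ a) μ := by
  simp only [dotProduct_mulVec_eq_sum]
  exact integrable_finsetSum _ fun i _ => integrable_finsetSum _ fun j _ =>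
    (hφ.integrable j i).const_mul _

lemma integral_dotProduct_mulVec (hφ : ResolvesIdentity μ φ) (A : Matrix n n 𝕜) :
    ∫ a, star (φ a) ⬝ᵥ A *ᵥ φ a ∂μ = A.trace := by
  have integrable_entry (i j : n) :
      Integrable (fun a => A i j * (φ a j * (starRingEnd 𝕜) (φ a i))) μ :=
    (hφ.integrable j i).const_mul _
  simp only [dotProduct_mulVec_eq_sum]
  rw [integral_finsetSum _ fun i _ => integrable_finsetSum _ fun j _ => integrable_entry i j]
  simp only [integral_finsetSum _ fun j _ => integrable_entry _ j, integral_const_mul,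
    hφ.integral_eq_one]
  simp [Matrix.one_apply, Matrix.trace]

lemma integrable_norm_sq_dotProduct (hφ : ResolvesIdentity μ φ) (v : n → 𝕜) :
    Integrable (fun a => ‖star v ⬝ᵥ φ a‖ ^ 2) μ := by
  simpa only [re_dotProduct_vecMulVec_star_mulVec] using
    (hφ.integrable_dotProduct_mulVec (vecMulVec v (star v))).re

lemma integral_norm_sq_dotProduct (hφ : ResolvesIdentity μ φ) (v : n → 𝕜) :
    ∫ a, ‖star v ⬝ᵥ φ a‖ ^ 2 ∂μ = RCLike.re (star v ⬝ᵥ v) := by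
  simp only [← re_dotProduct_vecMulVec_star_mulVec]
  rw [integral_re (hφ.integrable_dotProduct_mulVec _), hφ.integral_dotProduct_mulVec,
    trace_vecMulVec, dotProduct_comm]

lemma integrable_bornWeight (hφ : ResolvesIdentity μ φ) {A : Matrix n n 𝕜} (hA : A.IsHermitian)
    (i : n) : Integrable (fun a => bornWeight hA (φ a) i) μ :=
  hφ.integrable_norm_sq_dotProduct _

lemma integral_bornWeight (hφ : ResolvesIdentity μ φ) {A : Matrix n n 𝕜} (hA : A.IsHermitian)
    (i : n) : ∫ a, bornWeight hA (φ a) i ∂μ = 1 := by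
  have norm_sq := inner_self_eq_norm_sq (𝕜 := 𝕜) (hA.eigenvectorBasis i)
  rw [hA.eigenvectorBasis.norm_eq_one, one_pow, EuclideanSpace.inner_eq_star_dotProduct,
    dotProduct_comm] at norm_sq
  exact (hφ.integral_norm_sq_dotProduct _).trans norm_sq

variable (hφ : ResolvesIdentity μ φ) (hunit : ∀ a, star (φ a) ⬝ᵥ φ a = 1)
include hφ hunit

lemma isFiniteMeasure : IsFiniteMeasure μ := by
  have integrable_one := hφ.integrable_dotProduct_mulVec 1
  simp only [one_mulVec, hunit] at integrable_one
  exact (integrable_const_iff_isFiniteMeasure one_ne_zero).mp integrable_one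

lemma measureReal_univ : μ.real Set.univ = Fintype.card n := by
  have integral_one := hφ.integral_dotProduct_mulVec 1
  simp only [one_mulVec, hunit, integral_const, trace_one] at integral_one
  rw [RCLike.real_smul_eq_coe_mul, mul_one] at integral_one
  exact_mod_cast integral_one

lemma integrable_comp_re_dotProduct_mulVec {E : Type*} [NormedAddCommGroup E] {f : ℝ → E}
    (hf : Continuous f) {A : Matrix n n 𝕜} (hA : A.IsHermitian) :
    Integrable (fun a => f (RCLike.re (star (φ a) ⬝ᵥ A *ᵥ φ a))) μ := by
  have := hφ.isFiniteMeasure hunit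
  have isCompact_hull := (Set.finite_range hA.eigenvalues).isCompact_convexHull ℝ
  obtain ⟨C, hC⟩ := isCompact_hull.exists_bound_of_continuousOn hf.continuousOn
  exact .of_bound
    (hf.comp_aestronglyMeasurable (hφ.integrable_dotProduct_mulVec A).re.aestronglyMeasurable) C
    (.of_forall fun a => hC _ (re_dotProduct_mulVec_mem_convexHull hA (hunit a)))

/-- The **Berezin–Lieb inequality**. -/
theorem sum_map_eigenvalues_le_integral {s : Set ℝ} {f : ℝ → ℝ} (hf : ConcaveOn ℝ s f)
    {A : Matrix n n 𝕜} (hA : A.IsHermitian) (hs : ∀ i, hA.eigenvalues i ∈ s)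
    (hint : Integrable (fun a => f (RCLike.re (star (φ a) ⬝ᵥ A *ᵥ φ a))) μ) :
    ∑ i, f (hA.eigenvalues i) ≤ ∫ a, f (RCLike.re (star (φ a) ⬝ᵥ A *ᵥ φ a)) ∂μ := by
  have integrable_term (i : n) :
      Integrable (fun a => bornWeight hA (φ a) i * f (hA.eigenvalues i)) μ :=
    (hφ.integrable_bornWeight hA i).mul_const _
  calc ∑ i, f (hA.eigenvalues i)
      = ∑ i, ∫ a, bornWeight hA (φ a) i * f (hA.eigenvalues i) ∂μ := by
        simp only [integral_mul_const, hφ.integral_bornWeight, one_mul]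
    _ = ∫ a, ∑ i, bornWeight hA (φ a) i * f (hA.eigenvalues i) ∂μ :=
        (integral_finsetSum _ fun i _ => integrable_term i).symm
    _ ≤ ∫ a, f (RCLike.re (star (φ a) ⬝ᵥ A *ᵥ φ a)) ∂μ :=
        integral_mono (integrable_finsetSum _ fun i _ => integrable_term i) hint
          fun a => sum_bornWeight_mul_map_le hf hA hs (hunit a)

end ResolvesIdentity

section Entropy

variable {μ : Measure Ω} {φ : Ω → n → ℂ}

theorem entropy_le_wehrlEntropy (hφ : ResolvesIdentity μ φ) (hunit : ∀ a, star (φ a) ⬝ᵥ φ a = 1)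
    {ρ : Matrix n n ℂ} (hρ : ρ.PosSemidef) : entropy ρ ≤ wehrlEntropy μ φ ρ := by
  rw [entropy, dif_pos hρ.isHermitian]
  exact hφ.sum_map_eigenvalues_le_integral hunit concaveOn_negMulLog hρ.isHermitian
    hρ.eigenvalues_nonneg
    (hφ.integrable_comp_re_dotProduct_mulVec hunit continuous_negMulLog hρ.isHermitian)

lemma entropy_ofReal_smul_one (c : ℝ) :
    entropy ((c : ℂ) • (1 : Matrix n n ℂ)) = Fintype.card n * negMulLog c := by
  have hH : ((c : ℂ) • (1 : Matrix n n ℂ)).IsHermitian := by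
    simp [IsHermitian, conjTranspose_smul]
  have eigenvalues_eq (i : n) : hH.eigenvalues i = c := by
    have : Nonempty n := ⟨i⟩
    have spectrum_eq : spectrum ℝ ((c : ℂ) • (1 : Matrix n n ℂ)) = {c} := by
      rw [Complex.coe_smul, ← Algebra.algebraMap_eq_smul_one, spectrum.scalar_eq]
    have mem_spectrum := hH.eigenvalues_mem_spectrum_real i
    rwa [spectrum_eq] at mem_spectrum
  rw [entropy, dif_pos hH]
  simp only [eigenvalues_eq, Finset.sum_const, Finset.card_univ, nsmul_eq_mul]

lemma wehrlEntropy_ofReal_smul_one (hφ : ResolvesIdentity μ φ)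
    (hunit : ∀ a, star (φ a) ⬝ᵥ φ a = 1) (c : ℝ) :
    wehrlEntropy μ φ ((c : ℂ) • (1 : Matrix n n ℂ)) = Fintype.card n * negMulLog c := by
  simp only [wehrlEntropy, smul_mulVec, one_mulVec, dotProduct_smul, hunit, smul_eq_mul, mul_one,
    Complex.ofReal_re, integral_const, hφ.measureReal_univ hunit]

lemma mul_negMulLog_inv {x : ℝ} (hx : x ≠ 0) : x * negMulLog x⁻¹ = log x := by
  rw [negMulLog, log_inv, neg_mul_neg, mul_inv_cancel_left₀ hx]

theorem wehrl_minus_quantum_entropy_nonneg_and_attained_general [Nonempty n]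
    (hφ : ResolvesIdentity μ φ) (hunit : ∀ a, star (φ a) ⬝ᵥ φ a = 1) :
    (∀ ρ : Matrix n n ℂ, ρ.PosSemidef → 0 ≤ wehrlEntropy μ φ ρ - entropy ρ)
    ∧ wehrlEntropy μ φ ((Fintype.card n : ℂ)⁻¹ • (1 : Matrix n n ℂ)) = log (Fintype.card n)
    ∧ entropy ((Fintype.card n : ℂ)⁻¹ • (1 : Matrix n n ℂ)) = log (Fintype.card n) := by
  have card_ne_zero : (Fintype.card n : ℝ) ≠ 0 := Nat.cast_ne_zero.mpr Fintype.card_ne_zero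
  have inv_card : (Fintype.card n : ℂ)⁻¹ = ((Fintype.card n : ℝ)⁻¹ : ℝ) := by push_cast; rfl
  refine ⟨fun ρ hρ => sub_nonneg.mpr (entropy_le_wehrlEntropy hφ hunit hρ), ?_, ?_⟩
  · rw [inv_card, wehrlEntropy_ofReal_smul_one hφ hunit, mul_negMulLog_inv card_ne_zero]
  · rw [inv_card, entropy_ofReal_smul_one, mul_negMulLog_inv card_ne_zero]

end Entropy

end BerezinLieb

/-- **The infimum of Wehrl minus quantum entropy is zero, attained at the
maximally mixed state**: `S^W[ρ] − S[ρ] ≥ 0` for every density matrix `ρ`, and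
`S^W[(1/d)·1] = ln d = S[(1/d)·1]`. -/
theorem wehrl_minus_quantum_entropy_nonneg_and_attained
    {d : ℕ} (hd : 1 ≤ d)
    {Ω : Type*} [MeasurableSpace Ω] (μ : Measure Ω)
    (φ : Ω → Fin d → ℂ)
    (hφm : ∀ i, Measurable fun a => φ a i)
    (hφu : ∀ a, star (φ a) ⬝ᵥ φ a = 1)
    (hφint : ∀ i j, Integrable (fun a => φ a i * (starRingEnd ℂ) (φ a j)) μ)
    (hφres : ∀ i j, (∫ a, φ a i * (starRingEnd ℂ) (φ a j) ∂μ) =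
      (1 : Matrix (Fin d) (Fin d) ℂ) i j) :
    (∀ ρ : Matrix (Fin d) (Fin d) ℂ, ρ.PosSemidef → ρ.trace = 1 →
      0 ≤ wehrlEntropy μ φ ρ - entropy ρ)
    ∧ wehrlEntropy μ φ (((d : ℂ))⁻¹ • (1 : Matrix (Fin d) (Fin d) ℂ)) = Real.log d
    ∧ entropy (((d : ℂ))⁻¹ • (1 : Matrix (Fin d) (Fin d) ℂ)) = Real.log d := by
  have : Nonempty (Fin d) := Fin.pos_iff_nonempty.mp hd
  obtain ⟨nonneg, attained⟩ :=
    wehrl_minus_quantum_entropy_nonneg_and_attained_general ⟨hφint, hφres⟩ hφu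
  exact ⟨fun ρ hρ _ => nonneg ρ hρ, by simpa only [Fintype.card_fin] using attained⟩
end
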